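/- Suppose X'X/n → Q with Q symmetric positive definite, and let β⁽ⁿ⁾ be a sequence of parameters with ‖√n β₂⁽ⁿ⁾‖ → ∞ as n → ∞. Then the distribution of √n(β̃ − β⁽ⁿ⁾) under P_{n,β⁽ⁿ⁾,σ} converges weakly to the N(0, σ²Q⁻¹) distribution on ℝ^k. -/

import Mathlib

open MeasureTheory Matrix Real Filter Topology ENNReal NNReal

noncomputable section

/-- Euclidean norm of a finite tuple. -/
def enorm2 {ι : Type*} [Fintype ι] (v : ι → ℝ) : ℝ := Real.sqrt (∑ i, v i ^ 2)

/-- The `N(0, σ² I)` distribution on `ι → ℝ`, given by its Lebesgue density. -/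
def gaussPi (ι : Type*) [Fintype ι] (σ2 : ℝ) : Measure (ι → ℝ) :=
  volume.withDensity fun x => ENNReal.ofReal
    ((2 * π * σ2) ^ (-(Fintype.card ι : ℝ) / 2) * Real.exp (-(enorm2 x) ^ 2 / (2 * σ2)))

/-- The Lebesgue density of the `N(0, σ² Q⁻¹)` distribution on `ι → ℝ`
(for `Q` symmetric positive definite). -/
def gaussCovDens {ι : Type*} [Fintype ι] [DecidableEq ι] (σ2 : ℝ) (Q : Matrix ι ι ℝ)
    (x : ι → ℝ) : ℝ :=
  (2 * π * σ2) ^ (-(Fintype.card ι : ℝ) / 2) * Real.sqrt Q.det *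
    Real.exp (-(x ⬝ᵥ Q.mulVec x) / (2 * σ2))

/-- The `N(0, σ² Q⁻¹)` distribution on `ι → ℝ` (for `Q` symmetric positive definite),
given by its Lebesgue density. -/
def gaussCov {ι : Type*} [Fintype ι] [DecidableEq ι] (σ2 : ℝ) (Q : Matrix ι ι ℝ) :
    Measure (ι → ℝ) :=
  volume.withDensity fun x => ENNReal.ofReal (gaussCovDens σ2 Q x)

open Classical in
/-- Symmetric positive semidefinite square root (junk value `0` off the psd cone). -/
def msqrt {ι : Type*} [Fintype ι] [DecidableEq ι] (A : Matrix ι ι ℝ) : Matrix ι ι ℝ :=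
  if h : A.PosSemidef then
    h.1.eigenvectorUnitary.1 * diagonal (Real.sqrt ∘ h.1.eigenvalues) *
      (star h.1.eigenvectorUnitary : Matrix ι ι ℝ)
  else 0

open Classical in
/-- Smallest eigenvalue of a symmetric matrix (junk value `0` otherwise). -/
def lamMin {ι : Type*} [Fintype ι] [DecidableEq ι] (A : Matrix ι ι ℝ) : ℝ :=
  if h : A.IsHermitian then ⨅ i, h.eigenvalues i else 0

open Classical in
/-- Largest eigenvalue of a symmetric matrix (junk value `0` otherwise). -/
def lamMax {ι : Type*} [Fintype ι] [DecidableEq ι] (A : Matrix ι ι ℝ) : ℝ :=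
  if h : A.IsHermitian then ⨆ i, h.eigenvalues i else 0

variable {n k₁ k₂ : ℕ}

/-- First block of columns of the design matrix. -/
def X1 (X : Matrix (Fin n) (Fin k₁ ⊕ Fin k₂) ℝ) : Matrix (Fin n) (Fin k₁) ℝ :=
  X.submatrix id Sum.inl

/-- Second block of columns of the design matrix. -/
def X2 (X : Matrix (Fin n) (Fin k₁ ⊕ Fin k₂) ℝ) : Matrix (Fin n) (Fin k₂) ℝ :=
  X.submatrix id Sum.inr

/-- Unrestricted least squares estimator. -/
def betaU (X : Matrix (Fin n) (Fin k₁ ⊕ Fin k₂) ℝ) (Y : Fin n → ℝ) : (Fin k₁ ⊕ Fin k₂) → ℝ :=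
  (Xᵀ * X)⁻¹.mulVec (Xᵀ.mulVec Y)

/-- Restricted least squares estimator. -/
def betaR (X : Matrix (Fin n) (Fin k₁ ⊕ Fin k₂) ℝ) (Y : Fin n → ℝ) : (Fin k₁ ⊕ Fin k₂) → ℝ :=
  Sum.elim (((X1 X)ᵀ * X1 X)⁻¹.mulVec ((X1 X)ᵀ.mulVec Y)) (fun _ => 0)

/-- Risk estimate of the restricted model. -/
def rR (X : Matrix (Fin n) (Fin k₁ ⊕ Fin k₂) ℝ) (σ2 : ℝ) (Y : Fin n → ℝ) : ℝ :=
  Y ⬝ᵥ Y - betaR X Y ⬝ᵥ (Xᵀ * X).mulVec (betaR X Y) + σ2 * (2 * k₁ - n)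

/-- Risk estimate of the unrestricted model. -/
def rU (X : Matrix (Fin n) (Fin k₁ ⊕ Fin k₂) ℝ) (σ2 : ℝ) (Y : Fin n → ℝ) : ℝ :=
  Y ⬝ᵥ Y - betaU X Y ⬝ᵥ (Xᵀ * X).mulVec (betaU X Y) + σ2 * (2 * (k₁ + k₂) - n)

/-- The model averaging weight `λ̂`. -/
def lamHat (α σ2 : ℝ) (X : Matrix (Fin n) (Fin k₁ ⊕ Fin k₂) ℝ) (Y : Fin n → ℝ) : ℝ :=
  Real.exp (-(α * rR X σ2 Y) / σ2) /
    (Real.exp (-(α * rR X σ2 Y) / σ2) + Real.exp (-(α * rU X σ2 Y) / σ2))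

/-- Leung and Barron's model averaging estimator `β̃`. -/
def mavg (α σ2 : ℝ) (X : Matrix (Fin n) (Fin k₁ ⊕ Fin k₂) ℝ) (Y : Fin n → ℝ) :
    (Fin k₁ ⊕ Fin k₂) → ℝ :=
  lamHat α σ2 X Y • betaR X Y + (1 - lamHat α σ2 X Y) • betaU X Y

/-- Projection on the column space of `X₁`. -/
def projR (X : Matrix (Fin n) (Fin k₁ ⊕ Fin k₂) ℝ) : Matrix (Fin n) (Fin n) ℝ :=
  X1 X * ((X1 X)ᵀ * X1 X)⁻¹ * (X1 X)ᵀ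

/-- Projection on the column space of `X`. -/
def projU (X : Matrix (Fin n) (Fin k₁ ⊕ Fin k₂) ℝ) : Matrix (Fin n) (Fin n) ℝ :=
  X * (Xᵀ * X)⁻¹ * Xᵀ

/-- The distribution `P_{n,β,σ}` of `Y = Xβ + u`, `u ~ N(0, σ² Iₙ)`. -/
def Pmeas (X : Matrix (Fin n) (Fin k₁ ⊕ Fin k₂) ℝ) (β : (Fin k₁ ⊕ Fin k₂) → ℝ) (σ2 : ℝ) :
    Measure (Fin n → ℝ) :=
  (gaussPi (Fin n) σ2).map (fun u => X.mulVec β + u)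

/-- The function `h_{a,b}(ξ) = ξ / (1 + a exp(−ξ²/b))`. -/
def hfun (a b ξ : ℝ) : ℝ := ξ / (1 + a * Real.exp (-ξ ^ 2 / b))

/-- The inverse `g_{a,b}` of `h_{a,b}`. -/
def gfun (a b : ℝ) : ℝ → ℝ := Function.invFun (hfun a b)

open Classical in
/-- `g(‖w‖) w / ‖w‖`, with the convention that this is `0` for `w = 0`. -/
def gdir (a b : ℝ) {ι : Type*} [Fintype ι] (w : ι → ℝ) : ι → ℝ :=
  if w = 0 then 0 else (gfun a b (enorm2 w) / enorm2 w) • w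


/-- The finite-sample density `f_{n,β,σ}` of `√n(β̃ − β)` (Theorem 3 of the paper). -/
def fdens {n k₁ k₂ : ℕ} (X : Matrix (Fin n) (Fin k₁ ⊕ Fin k₂) ℝ)
    (β : (Fin k₁ ⊕ Fin k₂) → ℝ) (σ2 α : ℝ) (t : (Fin k₁ ⊕ Fin k₂) → ℝ) : ℝ :=
  let a := Real.exp (2 * α * k₂)
  let b := σ2 / α
  let S := (X2 X)ᵀ * (1 - projR X) * X2 X
  let w := (Real.sqrt n)⁻¹ • (msqrt S).mulVec ((t ∘ Sum.inr) + Real.sqrt n • (β ∘ Sum.inr))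
  (2 * π * σ2) ^ (-((k₁ : ℝ) + k₂) / 2) * Real.sqrt (((n : ℝ)⁻¹ • (Xᵀ * X)).det) *
    Real.exp (-(enorm2 ((Real.sqrt n)⁻¹ •
        ((msqrt ((X1 X)ᵀ * X1 X)).mulVec (t ∘ Sum.inl) +
          ((msqrt ((X1 X)ᵀ * X1 X))⁻¹ * (X1 X)ᵀ * X2 X).mulVec (t ∘ Sum.inr)))) ^ 2 /
      (2 * σ2)) *
    (1 + Real.exp (-(α / σ2) * gfun a b (enorm2 w) ^ 2 + 2 * α * k₂)) ^ (k₂ : ℕ) *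
    (1 + (2 * α / σ2) * gfun a b (enorm2 w) ^ 2 *
        (1 + Real.exp ((α / σ2) * gfun a b (enorm2 w) ^ 2 - 2 * α * k₂))⁻¹)⁻¹ *
    Real.exp (-(enorm2 (gdir a b w - (msqrt S).mulVec (β ∘ Sum.inr))) ^ 2 / (2 * σ2))

/-- The density `f_{∞,γ}` of the limiting distribution (formula (13) of the paper),
stated for a general symmetric positive definite matrix in place of `Q`. -/
def fInfty {k₁ k₂ : ℕ} (Q : Matrix (Fin k₁ ⊕ Fin k₂) (Fin k₁ ⊕ Fin k₂) ℝ) (σ2 α : ℝ)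
    (γ : Fin k₂ → ℝ) (t : (Fin k₁ ⊕ Fin k₂) → ℝ) : ℝ :=
  let a := Real.exp (2 * α * k₂)
  let b := σ2 / α
  let S := Q.toBlocks₂₂ - Q.toBlocks₂₁ * Q.toBlocks₁₁⁻¹ * Q.toBlocks₁₂
  let w := (msqrt S).mulVec ((t ∘ Sum.inr) + γ)
  (2 * π * σ2) ^ (-((k₁ : ℝ) + k₂) / 2) * Real.sqrt Q.det *
    Real.exp (-(enorm2 ((msqrt Q.toBlocks₁₁).mulVec (t ∘ Sum.inl) +
        ((msqrt Q.toBlocks₁₁)⁻¹ * Q.toBlocks₁₂).mulVec (t ∘ Sum.inr))) ^ 2 / (2 * σ2)) *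
    (1 + Real.exp (-(α / σ2) * gfun a b (enorm2 w) ^ 2 + 2 * α * k₂)) ^ (k₂ : ℕ) *
    (1 + (2 * α / σ2) * gfun a b (enorm2 w) ^ 2 *
        (1 + Real.exp ((α / σ2) * gfun a b (enorm2 w) ^ 2 - 2 * α * k₂))⁻¹)⁻¹ *
    Real.exp (-(enorm2 (gdir a b w - (msqrt S).mulVec γ)) ^ 2 / (2 * σ2))



lemma aux_enorm2_sq {ι : Type*} [Fintype ι] (v : ι → ℝ) : enorm2 v ^ 2 = ∑ i, v i ^ 2 := by
  unfold enorm2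
  exact Real.sq_sqrt (Finset.sum_nonneg fun i _ => sq_nonneg _)

lemma aux_dens_meas {ι : Type*} [Fintype ι] (σ2 : ℝ) :
    Measurable (fun x : ι → ℝ => (2 * π * σ2) ^ (-(Fintype.card ι : ℝ) / 2) *
      Real.exp (-(enorm2 x) ^ 2 / (2 * σ2))) := by
  simp only [aux_enorm2_sq]
  fun_prop

lemma aux_integrable_exp {ι : Type*} [Fintype ι] {b : ℝ} (hb : 0 < b) :
    Integrable (fun x : ι → ℝ => Real.exp (-b * ∑ i, x i ^ 2)) := by
  have h := (GaussianFourier.integrable_cexp_neg_mul_sum_add (ι := ι) (b := (b : ℂ))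
    (by simpa using hb) (fun _ => 0)).norm
  refine h.congr (Eventually.of_forall fun x => ?_)
  simp only [zero_mul, Finset.sum_const_zero, add_zero]
  rw [Complex.norm_exp]
  congr 1
  have : (-(b:ℂ) * ∑ i, (x i : ℂ) ^ 2) = ((-b * ∑ i, x i ^ 2 : ℝ) : ℂ) := by push_cast; ring
  rw [this, Complex.ofReal_re]

lemma aux_charfun {ι : Type*} [Fintype ι] {σ2 : ℝ} (hσ : 0 < σ2) (s : ι → ℝ) :
    ∫ x, Complex.exp (((s ⬝ᵥ x : ℝ) : ℂ) * Complex.I) ∂(gaussPi ι σ2)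
      = Complex.exp (((-(σ2 / 2) * (s ⬝ᵥ s) : ℝ) : ℂ)) := by
  unfold gaussPi
  have hpos : 0 < 2 * π * σ2 := by positivity
  rw [integral_withDensity_eq_integral_toReal_smul]
  · have key := GaussianFourier.integral_cexp_neg_mul_sum_add (ι := ι) (b := ((1 / (2 * σ2) : ℝ) : ℂ))
      (by rw [Complex.ofReal_re]; positivity) (fun i => (s i : ℂ) * Complex.I)
    set C : ℝ := (2 * π * σ2) ^ (-(Fintype.card ι : ℝ) / 2) with hC
    have h1 : ∀ x : ι → ℝ, (ENNReal.ofReal (C * Real.exp (-(enorm2 x) ^ 2 / (2 * σ2)))).toReal •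
        Complex.exp (((s ⬝ᵥ x : ℝ) : ℂ) * Complex.I) =
        (C : ℂ) * Complex.exp (-((1 / (2 * σ2) : ℝ) : ℂ) * ∑ i, (x i : ℂ) ^ 2
          + ∑ i, (s i : ℂ) * Complex.I * x i) := by
      intro x
      rw [ENNReal.toReal_ofReal (by positivity), aux_enorm2_sq, Complex.real_smul, Complex.exp_add]
      push_cast
      rw [mul_assoc]
      congr 2
      · congr 1
        field_simp
      · congr 1
        simp only [dotProduct]
        push_cast
        rw [Finset.sum_mul]
        refine Finset.sum_congr rfl fun i _ => by ring
    simp_rw [h1]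
    rw [integral_const_mul, key, ← mul_assoc]
    have h2 : (C : ℂ) * ((π : ℂ) / ((1 / (2 * σ2) : ℝ) : ℂ)) ^ ((Fintype.card ι : ℂ) / 2) = 1 := by
      have : ((π : ℂ) / ((1 / (2 * σ2) : ℝ) : ℂ)) = ((2 * π * σ2 : ℝ) : ℂ) := by
        push_cast
        have : (σ2 : ℂ) ≠ 0 := by exact_mod_cast hσ.ne'
        field_simp
      rw [this]
      have h3 : ((Fintype.card ι : ℂ) / 2) = (((Fintype.card ι : ℝ) / 2 : ℝ) : ℂ) := by
        push_cast; rfl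
      rw [h3, ← Complex.ofReal_cpow hpos.le, ← Complex.ofReal_mul, hC, ← Real.rpow_add hpos]
      have : -(Fintype.card ι : ℝ) / 2 + (Fintype.card ι : ℝ) / 2 = 0 := by ring
      rw [this, Real.rpow_zero, Complex.ofReal_one]
    rw [h2, one_mul]
    congr 1
    simp only [dotProduct, mul_pow, Complex.I_sq]
    push_cast
    have : (σ2 : ℂ) ≠ 0 := by exact_mod_cast hσ.ne'
    rw [← Finset.sum_mul]
    have h5 : ∑ i, (s i : ℂ) ^ 2 = ∑ i, (s i : ℂ) * s i := by
      refine Finset.sum_congr rfl fun i _ => by ring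
    rw [h5]
    field_simp
    ring
  · exact (aux_dens_meas σ2).ennreal_ofReal
  · exact Eventually.of_forall fun x => ENNReal.ofReal_lt_top

lemma aux_finite {ι : Type*} [Fintype ι] {σ2 : ℝ} (hσ : 0 < σ2) :
    IsFiniteMeasure (gaussPi ι σ2) := by
  unfold gaussPi
  apply isFiniteMeasure_withDensity_ofReal
  refine Integrable.hasFiniteIntegral ?_
  refine Integrable.const_mul ?_ _
  refine (aux_integrable_exp (b := 1 / (2 * σ2)) (by positivity)).congr
    (Eventually.of_forall fun x => ?_)
  simp only [aux_enorm2_sq]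
  congr 1
  field_simp

lemma aux_quad {ι κ : Type*} [Fintype ι] [Fintype κ] (M : Matrix ι κ ℝ) (s : ι → ℝ) :
    (s ᵥ* M) ⬝ᵥ (s ᵥ* M) = s ⬝ᵥ ((M * Mᵀ) *ᵥ s) := by
  rw [← Matrix.mulVec_mulVec, Matrix.dotProduct_mulVec s M, Matrix.mulVec_transpose]

lemma aux_map_eq {ι κ κ' : Type*} [Fintype ι] [Fintype κ] [Fintype κ'] [DecidableEq ι]
    {σ2 : ℝ} (hσ : 0 < σ2)
    (M : Matrix ι κ ℝ) (N : Matrix ι κ' ℝ) (h : M * Mᵀ = N * Nᵀ) :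
    (gaussPi κ σ2).map M.mulVec = (gaussPi κ' σ2).map N.mulVec := by
  have hM : Measurable M.mulVec := (Continuous.matrix_mulVec continuous_const continuous_id).measurable
  have hN : Measurable N.mulVec := (Continuous.matrix_mulVec continuous_const continuous_id).measurable
  have := aux_finite (ι := κ) hσ
  have := aux_finite (ι := κ') hσ
  apply Measure.ext_of_charFunDual
  ext L
  rw [charFunDual_apply, charFunDual_apply]
  set s : ι → ℝ := fun i => L (Pi.single i 1) with hs
  have hL : ∀ v : ι → ℝ, L v = s ⬝ᵥ v := by
    intro v
    conv_lhs => rw [pi_eq_sum_univ' v]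
    rw [map_sum]
    simp only [map_smul, smul_eq_mul, dotProduct, hs, mul_comm]
  simp_rw [hL]
  rw [integral_map hM.aemeasurable (by fun_prop), integral_map hN.aemeasurable (by fun_prop)]
  simp_rw [Matrix.dotProduct_mulVec]
  rw [aux_charfun hσ, aux_charfun hσ]
  congr 4
  rw [aux_quad, aux_quad, h]

open scoped MatrixOrder Matrix.Norms.L2Operator in
lemma aux_factor {ι : Type*} [Fintype ι] [DecidableEq ι] {Q : Matrix ι ι ℝ} (hQ : Q.PosDef) :
    ∃ B : Matrix ι ι ℝ, Q = Bᵀ * B := by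
  obtain ⟨B, hB⟩ := CStarAlgebra.nonneg_iff_eq_star_mul_self.mp
    (Matrix.nonneg_iff_posSemidef.mpr hQ.posSemidef)
  exact ⟨B, hB⟩

lemma aux_gaussCov_eq {ι : Type*} [Fintype ι] [DecidableEq ι] (σ2 : ℝ)
    {Q B : Matrix ι ι ℝ} (hQ : Q.PosDef) (hB : Q = Bᵀ * B) :
    gaussCov σ2 Q = (gaussPi ι σ2).map (B⁻¹).mulVec := by
  have hdet : Q.det = B.det ^ 2 := by rw [hB, Matrix.det_mul, Matrix.det_transpose]; ring
  have hB0 : B.det ≠ 0 := by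
    intro h
    have := hQ.det_pos
    rw [hdet, h] at this
    simp at this
  have hBu : IsUnit B.det := isUnit_iff_ne_zero.mpr hB0
  have hM : ∀ M : Matrix ι ι ℝ, Measurable M.mulVec := fun M =>
    (Continuous.matrix_mulVec continuous_const continuous_id).measurable
  have hvol : volume = ENNReal.ofReal |B.det| • Measure.map (B.mulVec) (volume : Measure (ι → ℝ)) := by
    have := Real.map_matrix_volume_pi_eq_smul_volume_pi hB0
    have h2 : (⇑(toLin' B)) = B.mulVec := by ext; simp
    rw [h2] at this
    rw [this, smul_smul, ← ENNReal.ofReal_mul (abs_nonneg _), ← abs_mul, mul_inv_cancel₀ hB0]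
    simp
  ext S hS
  rw [Measure.map_apply (hM _) hS]
  unfold gaussCov gaussPi
  rw [withDensity_apply _ hS, withDensity_apply _ ((hM _) hS)]
  conv_rhs => rw [hvol]
  rw [Measure.restrict_smul, lintegral_smul_measure, Measure.restrict_map (hM _) ((hM _) hS),
    lintegral_map (aux_dens_meas σ2).ennreal_ofReal (hM _)]
  have hpre : B.mulVec ⁻¹' ((B⁻¹).mulVec ⁻¹' S) = S := by
    ext x
    simp [Matrix.mulVec_mulVec, Matrix.nonsing_inv_mul B hBu]
  rw [hpre, smul_eq_mul, ← lintegral_const_mul' _ _ ENNReal.ofReal_ne_top]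
  congr 1
  ext x
  rw [← ENNReal.ofReal_mul (abs_nonneg _)]
  congr 1
  unfold gaussCovDens
  rw [hdet, Real.sqrt_sq_eq_abs, aux_enorm2_sq]
  have : x ⬝ᵥ Q.mulVec x = ∑ i, (B.mulVec x) i ^ 2 := by
    rw [hB, ← Matrix.mulVec_mulVec, Matrix.dotProduct_mulVec, Matrix.vecMul_transpose]
    simp only [dotProduct]
    refine Finset.sum_congr rfl fun i _ => by ring
  rw [this]
  ring

lemma aux_inl {n k₁ k₂ : ℕ} (X : Matrix (Fin n) (Fin k₁ ⊕ Fin k₂) ℝ) (v : Fin n → ℝ) (i : Fin k₁) :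
    ((X1 X)ᵀ *ᵥ v) i = (Xᵀ *ᵥ v) (Sum.inl i) := rfl

lemma aux_X1_posDef {n k₁ k₂ : ℕ} {X : Matrix (Fin n) (Fin k₁ ⊕ Fin k₂) ℝ}
    (hA : (Xᵀ * X).PosDef) : ((X1 X)ᵀ * X1 X).PosDef := by
  have := hA.submatrix (e := Sum.inl) Sum.inl_injective
  exact this

lemma aux_mul_betaR {n k₁ k₂ : ℕ} (X : Matrix (Fin n) (Fin k₁ ⊕ Fin k₂) ℝ) (Y : Fin n → ℝ) :
    X *ᵥ betaR X Y = X1 X *ᵥ (((X1 X)ᵀ * X1 X)⁻¹ *ᵥ ((X1 X)ᵀ *ᵥ Y)) := by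
  ext i
  simp only [betaR, Matrix.mulVec, dotProduct, Fintype.sum_sum_type, Sum.elim_inl, Sum.elim_inr,
    mul_zero, Finset.sum_const_zero, add_zero, X1, Matrix.submatrix_apply, id]

lemma aux_normalU {n k₁ k₂ : ℕ} {X : Matrix (Fin n) (Fin k₁ ⊕ Fin k₂) ℝ}
    (hA : (Xᵀ * X).PosDef) (Y : Fin n → ℝ) : (Xᵀ * X) *ᵥ betaU X Y = Xᵀ *ᵥ Y := by
  unfold betaU
  rw [Matrix.mulVec_mulVec, Matrix.mul_nonsing_inv _ ((Matrix.isUnit_iff_isUnit_det _).mp hA.isUnit),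
    Matrix.one_mulVec]

lemma aux_normalR {n k₁ k₂ : ℕ} {X : Matrix (Fin n) (Fin k₁ ⊕ Fin k₂) ℝ}
    (hA : (Xᵀ * X).PosDef) (Y : Fin n → ℝ) (i : Fin k₁) :
    ((Xᵀ * X) *ᵥ betaR X Y) (Sum.inl i) = (Xᵀ *ᵥ Y) (Sum.inl i) := by
  rw [← Matrix.mulVec_mulVec, aux_mul_betaR, ← aux_inl, ← aux_inl, Matrix.mulVec_mulVec,
    Matrix.mulVec_mulVec, Matrix.mul_nonsing_inv _
    ((Matrix.isUnit_iff_isUnit_det _).mp (aux_X1_posDef hA).isUnit), Matrix.one_mulVec]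

lemma aux_betaU_X {n k₁ k₂ : ℕ} {X : Matrix (Fin n) (Fin k₁ ⊕ Fin k₂) ℝ}
    (hA : (Xᵀ * X).PosDef) (b : Fin k₁ ⊕ Fin k₂ → ℝ) : betaU X (X *ᵥ b) = b := by
  unfold betaU
  rw [Matrix.mulVec_mulVec, Matrix.mulVec_mulVec, Matrix.mul_assoc,
    Matrix.nonsing_inv_mul _ ((Matrix.isUnit_iff_isUnit_det _).mp hA.isUnit), Matrix.one_mulVec]

lemma aux_betaU_add {n k₁ k₂ : ℕ} {X : Matrix (Fin n) (Fin k₁ ⊕ Fin k₂) ℝ}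
    (hA : (Xᵀ * X).PosDef) (b : Fin k₁ ⊕ Fin k₂ → ℝ) (u : Fin n → ℝ) :
    betaU X (X *ᵥ b + u) = b + betaU X u := by
  conv_rhs => rw [← aux_betaU_X hA b]
  unfold betaU
  rw [Matrix.mulVec_add, Matrix.mulVec_add]

lemma aux_betaR_eq {n k₁ k₂ : ℕ} {X : Matrix (Fin n) (Fin k₁ ⊕ Fin k₂) ℝ}
    (hA : (Xᵀ * X).PosDef) (Y : Fin n → ℝ) : betaR X (X *ᵥ betaU X Y) = betaR X Y := by
  unfold betaR
  have : (X1 X)ᵀ *ᵥ (X *ᵥ betaU X Y) = (X1 X)ᵀ *ᵥ Y := by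
    ext i
    rw [aux_inl, aux_inl, Matrix.mulVec_mulVec, aux_normalU hA]
  rw [this]

lemma aux_r_diff {n k₁ k₂ : ℕ} {X : Matrix (Fin n) (Fin k₁ ⊕ Fin k₂) ℝ}
    (hA : (Xᵀ * X).PosDef) (σ2 : ℝ) (Y : Fin n → ℝ) :
    rR X σ2 Y - rU X σ2 Y =
      (betaR X Y - betaU X Y) ⬝ᵥ (Xᵀ * X) *ᵥ (betaR X Y - betaU X Y) - 2 * σ2 * k₂ := by
  have h1 : betaR X Y ⬝ᵥ (Xᵀ * X) *ᵥ betaR X Y = betaR X Y ⬝ᵥ (Xᵀ * X) *ᵥ betaU X Y := by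
    rw [aux_normalU hA]
    simp only [dotProduct, Fintype.sum_sum_type, aux_normalR hA]
    simp [betaR]
  have h2 : betaU X Y ⬝ᵥ (Xᵀ * X) *ᵥ betaR X Y = betaR X Y ⬝ᵥ (Xᵀ * X) *ᵥ betaU X Y := by
    rw [Matrix.dotProduct_mulVec, ← Matrix.mulVec_transpose, Matrix.transpose_mul,
      Matrix.transpose_transpose, dotProduct_comm]
  unfold rR rU
  rw [Matrix.mulVec_sub, dotProduct_sub, sub_dotProduct, sub_dotProduct, h2, h1]
  ring

lemma aux_lam {n k₁ k₂ : ℕ} (α σ2 : ℝ) (X : Matrix (Fin n) (Fin k₁ ⊕ Fin k₂) ℝ) (Y : Fin n → ℝ) :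
    lamHat α σ2 X Y = (1 + Real.exp (α / σ2 * (rR X σ2 Y - rU X σ2 Y)))⁻¹ := by
  unfold lamHat
  have : Real.exp (-(α * rU X σ2 Y) / σ2) =
      Real.exp (-(α * rR X σ2 Y) / σ2) * Real.exp (α / σ2 * (rR X σ2 Y - rU X σ2 Y)) := by
    rw [← Real.exp_add]; congr 1; ring
  rw [this]
  have h1 := Real.exp_pos (-(α * rR X σ2 Y) / σ2)
  have h2 := Real.exp_pos (α / σ2 * (rR X σ2 Y - rU X σ2 Y))
  field_simp

lemma aux_mavg_eq {n k₁ k₂ : ℕ} {X : Matrix (Fin n) (Fin k₁ ⊕ Fin k₂) ℝ}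
    (hA : (Xᵀ * X).PosDef) (α σ2 : ℝ) (Y : Fin n → ℝ) :
    mavg α σ2 X (X *ᵥ betaU X Y) = mavg α σ2 X Y := by
  unfold mavg
  rw [aux_lam, aux_lam, aux_r_diff hA, aux_r_diff hA, aux_betaR_eq hA, aux_betaU_X hA]

lemma aux_mavg_cont {n k₁ k₂ : ℕ} (X : Matrix (Fin n) (Fin k₁ ⊕ Fin k₂) ℝ) (α σ2 : ℝ) :
    Continuous (mavg α σ2 X) := by
  have hU : Continuous (betaU X) := by
    unfold betaU; fun_prop
  have hR : Continuous (betaR X) := by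
    unfold betaR
    refine continuous_pi fun i => ?_
    cases i with
    | inl i => 
      simp only [Sum.elim_inl]
      have : Continuous fun Y => ((((X1 X)ᵀ * X1 X)⁻¹.mulVec ((X1 X)ᵀ.mulVec Y))) := by fun_prop
      exact (continuous_apply i).comp this
    | inr i => simpa using continuous_const
  have hl : Continuous (lamHat α σ2 X) := by
    have : lamHat α σ2 X = fun Y => (1 + Real.exp (α / σ2 * (rR X σ2 Y - rU X σ2 Y)))⁻¹ :=
      funext (aux_lam α σ2 X)
    rw [this]
    have h1 : Continuous (rR X σ2) := by
      unfold rR; fun_prop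
    have h2 : Continuous (rU X σ2) := by
      unfold rU; fun_prop
    refine Continuous.inv₀ (by fun_prop) fun Y => ?_
    positivity
  unfold mavg
  fun_prop

/-- Centered and scaled estimator as a function of the scaled error of the unrestricted one. -/
def auxG {n k₁ k₂ : ℕ} (α σ2 : ℝ) (X : Matrix (Fin n) (Fin k₁ ⊕ Fin k₂) ℝ)
    (β : (Fin k₁ ⊕ Fin k₂) → ℝ) (t : (Fin k₁ ⊕ Fin k₂) → ℝ) : (Fin k₁ ⊕ Fin k₂) → ℝ :=
  Real.sqrt n • (mavg α σ2 X (X *ᵥ (β + (Real.sqrt n)⁻¹ • t)) - β)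

lemma auxG_cont {n k₁ k₂ : ℕ} (α σ2 : ℝ) (X : Matrix (Fin n) (Fin k₁ ⊕ Fin k₂) ℝ)
    (β : (Fin k₁ ⊕ Fin k₂) → ℝ) : Continuous (auxG α σ2 X β) := by
  unfold auxG
  have := aux_mavg_cont X α σ2
  fun_prop

lemma aux_law {n k₁ k₂ : ℕ} (hn : 0 < n) {X : Matrix (Fin n) (Fin k₁ ⊕ Fin k₂) ℝ}
    (hA : (Xᵀ * X).PosDef) (α : ℝ) {σ2 : ℝ} (hσ : 0 < σ2) (β : (Fin k₁ ⊕ Fin k₂) → ℝ) :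
    (Pmeas X β σ2).map (fun Y => Real.sqrt n • (mavg α σ2 X Y - β)) =
      (gaussCov σ2 ((n : ℝ)⁻¹ • (Xᵀ * X))).map (auxG α σ2 X β) := by
  have hn' : (0 : ℝ) < n := by exact_mod_cast hn
  have hs : Real.sqrt n ≠ 0 := (Real.sqrt_pos.mpr hn').ne'
  have hss : Real.sqrt n * Real.sqrt n = n := Real.mul_self_sqrt hn'.le
  have hQ : ((n : ℝ)⁻¹ • (Xᵀ * X)).PosDef := hA.smul (by positivity)
  obtain ⟨B, hB⟩ := aux_factor hQ
  have hAu := (Matrix.isUnit_iff_isUnit_det _).mp hA.isUnit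
  have hQu := (Matrix.isUnit_iff_isUnit_det _).mp hQ.isUnit
  have hcov : B⁻¹ * (B⁻¹)ᵀ = (Real.sqrt n • ((Xᵀ * X)⁻¹ * Xᵀ)) * (Real.sqrt n • ((Xᵀ * X)⁻¹ * Xᵀ))ᵀ := by
    have e1 : B⁻¹ * (B⁻¹)ᵀ = ((n : ℝ)⁻¹ • (Xᵀ * X))⁻¹ := by
      rw [hB, Matrix.mul_inv_rev, Matrix.transpose_nonsing_inv]
    have e2 : (Xᵀ * X)ᵀ = Xᵀ * X := by rw [Matrix.transpose_mul, Matrix.transpose_transpose]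
    rw [e1, Matrix.transpose_smul, Matrix.transpose_mul, Matrix.transpose_transpose,
      Matrix.transpose_nonsing_inv, e2, Matrix.smul_mul, Matrix.mul_smul, smul_smul, hss]
    apply Matrix.inv_eq_left_inv
    have e3 : (Xᵀ * X)⁻¹ * Xᵀ * (X * (Xᵀ * X)⁻¹) = (Xᵀ * X)⁻¹ := by
      rw [Matrix.mul_assoc, ← Matrix.mul_assoc Xᵀ X, Matrix.mul_nonsing_inv _ hAu, Matrix.mul_one]
    rw [e3, Matrix.smul_mul, Matrix.mul_smul, smul_smul, mul_inv_cancel₀ hn'.ne', one_smul,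
      Matrix.nonsing_inv_mul _ hAu]
  rw [aux_gaussCov_eq σ2 hQ hB, aux_map_eq hσ _ _ hcov]
  unfold Pmeas
  have m1 : Measurable (fun Y => Real.sqrt n • (mavg α σ2 X Y - β)) := by
    have := aux_mavg_cont X α σ2
    exact Continuous.measurable (by fun_prop)
  have m2 : Measurable (Real.sqrt n • ((Xᵀ * X)⁻¹ * Xᵀ)).mulVec :=
    (Continuous.matrix_mulVec continuous_const continuous_id).measurable
  rw [Measure.map_map m1 (by fun_prop), Measure.map_map (auxG_cont α σ2 X β).measurable
    m2]
  congr 1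
  ext1 u
  simp only [Function.comp, auxG]
  rw [Matrix.smul_mulVec, smul_smul, inv_mul_cancel₀ hs, one_smul, ← aux_mavg_eq hA,
    aux_betaU_add hA]
  congr 5
  rw [betaU, Matrix.mulVec_mulVec]

lemma auxG_bound {n k₁ k₂ : ℕ} (hn : 0 < n) {X : Matrix (Fin n) (Fin k₁ ⊕ Fin k₂) ℝ}
    (hA : (Xᵀ * X).PosDef) {α σ2 c : ℝ} (hα : 0 < α) (hσ : 0 < σ2)
    (hQ : ∀ x, c * ‖x‖ ^ 2 ≤ x ⬝ᵥ ((n : ℝ)⁻¹ • (Xᵀ * X)) *ᵥ x)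
    (β t : (Fin k₁ ⊕ Fin k₂) → ℝ) :
    ∃ r : ℝ, ‖Real.sqrt n • (β ∘ Sum.inr) + t ∘ Sum.inr‖ ≤ r ∧
      ‖auxG α σ2 X β t - t‖ ≤ r * Real.exp (2 * α * k₂ - α / σ2 * c * r ^ 2) := by
  have hn' : (0 : ℝ) < n := by exact_mod_cast hn
  have hs : Real.sqrt n ≠ 0 := (Real.sqrt_pos.mpr hn').ne'
  have hss : Real.sqrt n * Real.sqrt n = n := Real.mul_self_sqrt hn'.le
  set Y := X *ᵥ (β + (Real.sqrt n)⁻¹ • t) with hY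
  set D := Real.sqrt n • (betaR X Y - betaU X Y) with hD
  have hU : betaU X Y = β + (Real.sqrt n)⁻¹ • t := aux_betaU_X hA _
  have hG : auxG α σ2 X β t - t = lamHat α σ2 X Y • D := by
    unfold auxG mavg
    rw [← hY, hD]
    have ht : t = Real.sqrt n • (betaU X Y - β) := by
      rw [hU, add_sub_cancel_left, smul_smul, mul_inv_cancel₀ hs, one_smul]
    conv_lhs => rw [ht]
    ext i
    simp only [Pi.sub_apply, Pi.smul_apply, Pi.add_apply, smul_eq_mul]
    ring
  refine ⟨‖D‖, ?_, ?_⟩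
  · refine (pi_norm_le_iff_of_nonneg (norm_nonneg _)).mpr fun i => ?_
    refine le_trans (le_of_eq ?_) (norm_le_pi_norm D (Sum.inr i))
    rw [hD, hU, ← norm_neg]
    congr 1
    simp only [betaR, Pi.sub_apply, Pi.smul_apply, Pi.add_apply, smul_eq_mul, Sum.elim_inr,
      Function.comp]
    field_simp
    ring
  · rw [hG, norm_smul, mul_comm]
    gcongr
    have hq : (betaR X Y - betaU X Y) ⬝ᵥ (Xᵀ * X) *ᵥ (betaR X Y - betaU X Y) =
        D ⬝ᵥ ((n : ℝ)⁻¹ • (Xᵀ * X)) *ᵥ D := by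
      rw [hD, Matrix.smul_mulVec, Matrix.mulVec_smul, smul_dotProduct, dotProduct_smul,
        dotProduct_smul]
      simp only [smul_eq_mul]
      field_simp
      rw [Real.sq_sqrt hn'.le]
    rw [aux_lam, aux_r_diff hA, hq, Real.norm_of_nonneg (by positivity)]
    have h1 := hQ D
    calc _ ≤ (Real.exp (α / σ2 * (D ⬝ᵥ ((n : ℝ)⁻¹ • (Xᵀ * X)) *ᵥ D - 2 * σ2 * k₂)))⁻¹ := by
          gcongr; linarith
      _ = Real.exp (-(α / σ2 * (D ⬝ᵥ ((n : ℝ)⁻¹ • (Xᵀ * X)) *ᵥ D - 2 * σ2 * k₂))) := by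
          rw [Real.exp_neg]
      _ ≤ _ := by
          apply Real.exp_le_exp.mpr
          have h2 : α / σ2 * (c * ‖D‖ ^ 2) ≤ α / σ2 * (D ⬝ᵥ ((n : ℝ)⁻¹ • (Xᵀ * X)) *ᵥ D) := by
            gcongr
          have h3 : α / σ2 * (2 * σ2 * k₂) = 2 * α * k₂ := by field_simp
          rw [mul_sub, h3]
          linarith

lemma aux_lower {ι : Type*} [Fintype ι] [DecidableEq ι] {Q : Matrix ι ι ℝ} (hQ : Q.PosDef) :
    ∃ c : ℝ, 0 < c ∧ ∀ x : ι → ℝ, c * ‖x‖ ^ 2 ≤ x ⬝ᵥ Q *ᵥ x := by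
  by_cases hne : (Metric.sphere (0 : ι → ℝ) 1).Nonempty
  · obtain ⟨x0, hx0, hmin⟩ := (isCompact_sphere (0 : ι → ℝ) 1).exists_isMinOn hne
      (f := fun x => x ⬝ᵥ Q *ᵥ x) (Continuous.continuousOn (by fun_prop))
    have hx0n : ‖x0‖ = 1 := by simpa using hx0
    have hx00 : x0 ≠ 0 := by
      rintro rfl
      simp at hx0n
    refine ⟨x0 ⬝ᵥ Q *ᵥ x0, by simpa using hQ.dotProduct_mulVec_pos hx00, fun x => ?_⟩
    by_cases hx : x = 0
    · simp [hx]
    have hxn : ‖x‖ ≠ 0 := norm_ne_zero_iff.mpr hx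
    have h := hmin (a := ‖x‖⁻¹ • x) (by simp [norm_smul, inv_mul_cancel₀ hxn])
    simp only [Set.mem_ofPred_eq, Matrix.mulVec_smul, smul_dotProduct, dotProduct_smul,
      smul_eq_mul] at h
    have hp : 0 < ‖x‖ := norm_pos_iff.mpr hx
    calc _ ≤ (‖x‖⁻¹ * (‖x‖⁻¹ * (x ⬝ᵥ Q *ᵥ x))) * ‖x‖ ^ 2 := by gcongr
      _ = _ := by field_simp
  · refine ⟨1, one_pos, fun x => ?_⟩
    have hx : x = 0 := by
      by_contra hx
      exact hne ⟨‖x‖⁻¹ • x, by simp [norm_smul, inv_mul_cancel₀ (norm_ne_zero_iff.mpr hx)]⟩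
    simp [hx]

lemma aux_lower_nhds {ι : Type*} [Fintype ι] [DecidableEq ι] {Q : Matrix ι ι ℝ} (hQ : Q.PosDef) :
    ∃ c : ℝ, 0 < c ∧ ∀ᶠ M in 𝓝 Q, ∀ x : ι → ℝ, c * ‖x‖ ^ 2 ≤ x ⬝ᵥ M *ᵥ x := by
  obtain ⟨c, hc, h⟩ := aux_lower hQ
  refine ⟨c / 2, by positivity, ?_⟩
  have hcont : Continuous fun M : Matrix ι ι ℝ => ∑ i, ∑ j, |M i j - Q i j| := by fun_prop
  have hev : ∀ᶠ M in 𝓝 Q, ∑ i, ∑ j, |M i j - Q i j| < c / 2 := by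
    refine hcont.continuousAt.eventually_lt continuousAt_const ?_
    simpa using hc
  filter_upwards [hev] with M hM x
  have h1 : x ⬝ᵥ Q *ᵥ x - x ⬝ᵥ M *ᵥ x ≤ (∑ i, ∑ j, |M i j - Q i j|) * ‖x‖ ^ 2 := by
    simp only [dotProduct, Matrix.mulVec, Finset.mul_sum, Finset.sum_mul]
    rw [← Finset.sum_sub_distrib]
    refine Finset.sum_le_sum fun i _ => ?_
    rw [← Finset.sum_sub_distrib]
    refine Finset.sum_le_sum fun j _ => ?_
    have hi : |x i| ≤ ‖x‖ := norm_le_pi_norm x i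
    have hj : |x j| ≤ ‖x‖ := norm_le_pi_norm x j
    calc x i * (Q i j * x j) - x i * (M i j * x j) = -((M i j - Q i j) * (x i * x j)) := by ring
      _ ≤ |(M i j - Q i j) * (x i * x j)| := neg_le_abs _
      _ = |M i j - Q i j| * (|x i| * |x j|) := by rw [abs_mul, abs_mul]
      _ ≤ |M i j - Q i j| * (‖x‖ * ‖x‖) := by gcongr
      _ = _ := by ring
  have h2 := h x
  have h3 : (∑ i, ∑ j, |M i j - Q i j|) * ‖x‖ ^ 2 ≤ c / 2 * ‖x‖ ^ 2 := by gcongr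
  linarith

lemma aux_sum_sq_le {ι : Type*} [Fintype ι] (x : ι → ℝ) :
    ∑ i, x i ^ 2 ≤ Fintype.card ι * ‖x‖ ^ 2 := by
  have : ∀ i ∈ Finset.univ, x i ^ 2 ≤ ‖x‖ ^ 2 := fun i _ => by
    have hi : |x i| ≤ ‖x‖ := norm_le_pi_norm x i
    rw [← sq_abs]; gcongr
  simpa using Finset.sum_le_card_nsmul _ _ _ this

lemma aux_small {K a : ℝ} (ha : 0 < a) {r : ℝ} (hr : 0 < r) :
    r * Real.exp (K - a * r ^ 2) ≤ Real.exp K / a * r⁻¹ := by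
  have h1 : a * r ^ 2 ≤ Real.exp (a * r ^ 2) := by linarith [Real.add_one_le_exp (a * r ^ 2)]
  have h2 : 0 < a * r ^ 2 := by positivity
  rw [Real.exp_sub]
  calc r * (Real.exp K / Real.exp (a * r ^ 2)) ≤ r * (Real.exp K / (a * r ^ 2)) := by gcongr
    _ = _ := by field_simp

lemma auxG_tendsto {k₁ k₂ : ℕ} 
    (X : ∀ n : ℕ, Matrix (Fin n) (Fin k₁ ⊕ Fin k₂) ℝ)
    {σ2 α c : ℝ} (hσ : 0 < σ2) (hα : 0 < α) (hc : 0 < c)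
    (hA : ∀ᶠ n in atTop, ((X n)ᵀ * X n).PosDef)
    (hQ : ∀ᶠ n : ℕ in atTop, ∀ x, c * ‖x‖ ^ 2 ≤ x ⬝ᵥ ((n : ℝ)⁻¹ • ((X n)ᵀ * X n)) *ᵥ x)
    (β : ∀ _ : ℕ, (Fin k₁ ⊕ Fin k₂) → ℝ)
    (hβ : Tendsto (fun n : ℕ => enorm2 (Real.sqrt n • (β n ∘ Sum.inr))) atTop atTop)
    (t : (Fin k₁ ⊕ Fin k₂) → ℝ) :
    Tendsto (fun n => auxG α σ2 (X n) (β n) t) atTop (𝓝 t) := by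
  have hnorm : Tendsto (fun n : ℕ => ‖Real.sqrt n • (β n ∘ Sum.inr) + t ∘ Sum.inr‖) atTop atTop := by
    have hle : ∀ v : Fin k₂ → ℝ, enorm2 v ≤ Real.sqrt k₂ * ‖v‖ := by
      intro v
      have := aux_sum_sq_le v
      rw [Fintype.card_fin] at this
      unfold enorm2
      calc _ ≤ Real.sqrt (k₂ * ‖v‖ ^ 2) := Real.sqrt_le_sqrt this
        _ = _ := by rw [Real.sqrt_mul (by positivity), Real.sqrt_sq (norm_nonneg _)]
    have h1 : Tendsto (fun n : ℕ => Real.sqrt k₂ * ‖Real.sqrt n • (β n ∘ Sum.inr)‖) atTop atTop :=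
      tendsto_atTop_mono (fun n => hle _) hβ
    have hk : 0 < Real.sqrt k₂ := by
      rcases Nat.eq_zero_or_pos k₂ with h | h
      · subst h
        simp at h1
        exact absurd h1 (not_tendsto_const_atTop _ _)
      · positivity
    have h2 : Tendsto (fun n : ℕ => ‖Real.sqrt n • (β n ∘ Sum.inr)‖) atTop atTop := by
      exact (tendsto_const_mul_atTop_of_pos hk).mp h1
    refine tendsto_atTop_mono (fun n => ?_) (tendsto_atTop_add_const_right _ (-‖t ∘ Sum.inr‖) h2)
    have := norm_sub_norm_le (Real.sqrt n • (β n ∘ Sum.inr)) (-(t ∘ Sum.inr))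
    rw [norm_neg, sub_neg_eq_add] at this
    linarith
  rw [tendsto_iff_norm_sub_tendsto_zero]
  have ha : 0 < α / σ2 * c := by positivity
  have hlim : Tendsto (fun n : ℕ => Real.exp (2 * α * k₂) / (α / σ2 * c) *
      ‖Real.sqrt n • (β n ∘ Sum.inr) + t ∘ Sum.inr‖⁻¹) atTop (𝓝 0) := by
    simpa using hnorm.inv_tendsto_atTop.const_mul (Real.exp (2 * α * k₂) / (α / σ2 * c))
  refine squeeze_zero' (Eventually.of_forall fun n => norm_nonneg _) ?_ hlim
  filter_upwards [hA, hQ, hnorm.eventually_gt_atTop 0, eventually_gt_atTop 0] with n h1 h2 h3 h4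
  obtain ⟨r, hr, hb⟩ := auxG_bound h4 h1 hα hσ h2 (β n) t
  have hr0 : 0 < r := h3.trans_le hr
  refine hb.trans ((aux_small ha hr0).trans ?_)
  gcongr

lemma aux_covdens_meas {ι : Type*} [Fintype ι] [DecidableEq ι] (σ2 : ℝ) (Q : Matrix ι ι ℝ) :
    Measurable (gaussCovDens σ2 Q) := by
  unfold gaussCovDens
  exact Continuous.measurable (by fun_prop)

lemma aux_integral {ι : Type*} [Fintype ι] [DecidableEq ι] {σ2 : ℝ} (hσ : 0 < σ2) (Q : Matrix ι ι ℝ)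
    (g : (ι → ℝ) → ℝ) :
    ∫ t, g t ∂(gaussCov σ2 Q) = ∫ t, gaussCovDens σ2 Q t * g t := by
  unfold gaussCov
  rw [integral_withDensity_eq_integral_toReal_smul (aux_covdens_meas σ2 Q).ennreal_ofReal
    (Eventually.of_forall fun x => ENNReal.ofReal_lt_top)]
  refine integral_congr_ae (Eventually.of_forall fun t => ?_)
  have : 0 ≤ gaussCovDens σ2 Q t := by unfold gaussCovDens; positivity
  simp [ENNReal.toReal_ofReal this]

/-- if `‖√n β₂⁽ⁿ⁾‖ → ∞`, the distribution of `√n(β̃ − β⁽ⁿ⁾)` under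
`P_{n,β⁽ⁿ⁾,σ}` converges weakly to `N(0, σ²Q⁻¹)`. -/
theorem statement6 {k₁ k₂ : ℕ} (hk₁ : 0 < k₁) (hk₂ : 0 < k₂)
    (X : ∀ n : ℕ, Matrix (Fin n) (Fin k₁ ⊕ Fin k₂) ℝ)
    (hX : ∀ n, k₁ + k₂ ≤ n → (X n).rank = k₁ + k₂)
    (Q : Matrix (Fin k₁ ⊕ Fin k₂) (Fin k₁ ⊕ Fin k₂) ℝ) (hQ : Q.PosDef)
    (hlim : Tendsto (fun n : ℕ => (n : ℝ)⁻¹ • ((X n)ᵀ * X n)) atTop (𝓝 Q))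
    (σ α : ℝ) (hσ : 0 < σ) (hα : 0 < α)
    (β : ∀ _ : ℕ, (Fin k₁ ⊕ Fin k₂) → ℝ)
    (hβ : Tendsto (fun n : ℕ => enorm2 (Real.sqrt n • (β n ∘ Sum.inr))) atTop atTop) :
    ∀ f : BoundedContinuousFunction ((Fin k₁ ⊕ Fin k₂) → ℝ) ℝ,
      Tendsto (fun n : ℕ =>
          ∫ t, f t ∂((Pmeas (X n) (β n) (σ ^ 2)).map
            (fun Y => Real.sqrt n • (mavg α (σ ^ 2) (X n) Y - β n))))
        atTop (𝓝 (∫ t, f t ∂(gaussCov (σ ^ 2) Q))) := by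
  intro f
  have hσ2 : 0 < σ ^ 2 := by positivity
  obtain ⟨c, hc, hcev⟩ := aux_lower_nhds hQ
  have hQn := hlim.eventually hcev
  have hA : ∀ᶠ n in atTop, ((X n)ᵀ * X n).PosDef := by
    filter_upwards [hQn, eventually_gt_atTop 0] with n h1 h2
    have hn : (0 : ℝ) < n := by exact_mod_cast h2
    refine Matrix.PosDef.of_dotProduct_mulVec_pos ?_ fun {x} hx => ?_
    · simpa using Matrix.isHermitian_conjTranspose_mul_self (X n)
    · have h3 := h1 x
      have hp : 0 < ‖x‖ := norm_pos_iff.mpr hx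
      have h4 : 0 < x ⬝ᵥ ((n : ℝ)⁻¹ • ((X n)ᵀ * X n)) *ᵥ x := lt_of_lt_of_le (by positivity) h3
      rw [Matrix.smul_mulVec, dotProduct_smul, smul_eq_mul] at h4
      simpa using (pos_iff_pos_of_mul_pos h4).mp (by positivity)
  have hdet : Tendsto (fun n : ℕ => ((n : ℝ)⁻¹ • ((X n)ᵀ * X n)).det) atTop (𝓝 Q.det) :=
    ((Continuous.matrix_det continuous_id).tendsto Q).comp hlim
  rw [aux_integral hσ2]
  have hmain : Tendsto (fun n : ℕ => ∫ t, gaussCovDens (σ ^ 2) ((n : ℝ)⁻¹ • ((X n)ᵀ * X n)) t *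
      f (auxG α (σ ^ 2) (X n) (β n) t)) atTop (𝓝 (∫ t, gaussCovDens (σ ^ 2) Q t * f t)) := by
    set C : ℝ := (2 * π * σ ^ 2) ^ (-(Fintype.card (Fin k₁ ⊕ Fin k₂) : ℝ) / 2) with hC
    have hC0 : 0 ≤ C := by positivity
    set K : ℝ := (Fintype.card (Fin k₁ ⊕ Fin k₂) : ℝ) with hK
    have hK0 : 0 < K := by
      rw [hK]; simp; exact_mod_cast Nat.add_pos_left hk₁ k₂
    set b : ℝ := c / K / (2 * σ ^ 2) with hb
    have hb0 : 0 < b := by positivity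
    refine tendsto_integral_filter_of_dominated_convergence
      (fun t => (C * Real.sqrt (Q.det + 1) * Real.exp (-b * ∑ i, t i ^ 2)) * ‖f‖) ?_ ?_ ?_ ?_
    · refine Eventually.of_forall fun n => Measurable.aestronglyMeasurable ?_
      exact (aux_covdens_meas _ _).mul
        (f.continuous.comp (auxG_cont α (σ ^ 2) (X n) (β n))).measurable
    · filter_upwards [hQn, hdet.eventually_le_const (lt_add_one Q.det)] with n h1 h2
      refine Eventually.of_forall fun t => ?_
      rw [norm_mul]
      refine mul_le_mul ?_ (f.norm_coe_le_norm _) (norm_nonneg _) (by positivity)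
      unfold gaussCovDens
      rw [Real.norm_of_nonneg (by positivity)]
      refine mul_le_mul (mul_le_mul_of_nonneg_left (Real.sqrt_le_sqrt h2) hC0) ?_ (by positivity)
        (by positivity)
      apply Real.exp_le_exp.mpr
      have h3 := h1 t
      have h4 := aux_sum_sq_le t
      have h5 : c / K * ∑ i, t i ^ 2 ≤ c * ‖t‖ ^ 2 := by
        calc c / K * ∑ i, t i ^ 2 ≤ c / K * (K * ‖t‖ ^ 2) := by gcongr
          _ = _ := by field_simp
      have h6 : -b * ∑ i, t i ^ 2 = -(c / K * ∑ i, t i ^ 2) / (2 * σ ^ 2) := by rw [hb]; ring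
      rw [h6]
      gcongr
      linarith
    · exact ((aux_integrable_exp hb0).const_mul _).mul_const _
    · refine Eventually.of_forall fun t => ?_
      refine Tendsto.mul ?_ ((f.continuous.tendsto t).comp
        (auxG_tendsto X hσ2 hα hc hA hQn β hβ t))
      have hcont : Continuous fun M : Matrix (Fin k₁ ⊕ Fin k₂) (Fin k₁ ⊕ Fin k₂) ℝ =>
          gaussCovDens (σ ^ 2) M t := by
        unfold gaussCovDens
        have : Continuous fun M : Matrix (Fin k₁ ⊕ Fin k₂) (Fin k₁ ⊕ Fin k₂) ℝ => M.det :=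
          Continuous.matrix_det continuous_id
        fun_prop
      exact (hcont.tendsto Q).comp hlim
  refine hmain.congr' ?_
  filter_upwards [hA, eventually_gt_atTop 0] with n h1 h2
  rw [aux_law h2 h1 α hσ2, integral_map (auxG_cont _ _ _ _).aemeasurable
    f.continuous.aestronglyMeasurable, aux_integral hσ2]

end
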